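/- Let ρ ∈ (−1, 1), let f_ρ(z₁, z₂) = (1/(2π√(1−ρ²)))·exp(−(z₁² − 2ρz₁z₂ + z₂²)/(2(1−ρ²))) be the standard bivariate Gaussian density with correlation ρ, let φ(z) = (1/√(2π))·exp(−z²/2), Φ(z) = ∫_{−∞}^z φ(t) dt, and let He_n denote the n-th probabilists' Hermite polynomial. Then for all real a, b: ∫_a^∞ ∫_b^∞ f_ρ(z₁, z₂) dz₂ dz₁ = (1 − Φ(a))·(1 − Φ(b)) + φ(a)·φ(b)·∑_{n=1}^∞ (ρⁿ/n!)·He_{n−1}(a)·He_{n−1}(b), and the series converges. -/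

import Mathlib

open Real

/-- The standard Gaussian probability density function. -/
noncomputable def stdGaussPDF (z : ℝ) : ℝ :=
  (1 / Real.sqrt (2 * Real.pi)) * Real.exp (-z ^ 2 / 2)

/-- The standard Gaussian cumulative distribution function. -/
noncomputable def stdGaussCDF (z : ℝ) : ℝ :=
  ∫ t in Set.Iic z, stdGaussPDF t

/-- The `n`-th probabilists' Hermite polynomial, via the Rodrigues formula
`He_n(z) = (−1)ⁿ·exp(z²/2)·(dⁿ/dzⁿ)exp(−z²/2)`. -/
noncomputable def He (n : ℕ) (z : ℝ) : ℝ :=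
  (-1 : ℝ) ^ n * Real.exp (z ^ 2 / 2) *
    iteratedDeriv n (fun x : ℝ => Real.exp (-x ^ 2 / 2)) z

/-- The standard bivariate Gaussian density with correlation `ρ`. -/
noncomputable def bivGaussPDF (ρ z₁ z₂ : ℝ) : ℝ :=
  (1 / (2 * Real.pi * Real.sqrt (1 - ρ ^ 2))) *
    Real.exp (-(z₁ ^ 2 - 2 * ρ * z₁ * z₂ + z₂ ^ 2) / (2 * (1 - ρ ^ 2)))

/-!
Let `S`, `T` be independent standard Gaussians and `φ` the standard Gaussian density.
Differentiating the characteristic function of `T` gives `E[(-iT)ⁿ e^{ixT}] = √(2π) He_n(x) φ(x)`,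
while `E[e^{-ρST} e^{ixS + iyT}] = 2π f_ρ(x, y)`. Expanding `e^{-ρST}` in the second identity and
using the first yields Mehler's series `f_ρ(x, y) = ∑ ρⁿ/n! · (He_n φ)(x) (He_n φ)(y)`. Since
`∫ He_n² φ = n!`, Cauchy–Schwarz gives `∫ |He_n φ| ≤ √n!`, so the `n`-th term has `L¹` norm at most
`|ρ|ⁿ` and the series may be integrated termwise; finally `∫_a^∞ He_{n+1} φ = (He_n φ)(a)`.
-/

open MeasureTheory ProbabilityTheory Polynomial
open Complex (I)
open scoped Nat

section General

theorem iteratedDeriv_continuousLinearMap_comp {𝕜 E F : Type*} [NontriviallyNormedField 𝕜]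
    [NormedAddCommGroup E] [NormedSpace 𝕜 E] [NormedAddCommGroup F] [NormedSpace 𝕜 F]
    (L : E →L[𝕜] F) {f : 𝕜 → E} {x : 𝕜} {n : ℕ} (hf : ContDiffAt 𝕜 n f x) :
    iteratedDeriv n (fun y => L (f y)) x = L (iteratedDeriv n f x) :=
  congrArg (fun m => m fun _ => 1) (L.iteratedFDeriv_comp_left hf le_rfl)

theorem iterate_derivative_eq_C_of_natDegree_le {R : Type*} [Semiring R] {p : R[X]} {n : ℕ}
    (hp : p.natDegree ≤ n) : derivative^[n] p = C (n ! • p.coeff n) := by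
  have hdeg : (derivative^[n] p).natDegree = 0 :=
    Nat.eq_zero_of_le_zero ((natDegree_iterate_derivative p n).trans (by omega))
  rw [eq_C_of_natDegree_eq_zero hdeg, coeff_iterate_derivative, zero_add, Nat.descFactorial_self]

theorem abs_mul_mul_le_add_sq_div_two {K : Type*} [Field K] [LinearOrder K]
    [IsStrictOrderedRing K] (c s t : K) : |c * s * t| ≤ |c| * s ^ 2 / 2 + |c| * t ^ 2 / 2 := by
  rw [mul_assoc, abs_mul, abs_mul, ← sq_abs s, ← sq_abs t]
  linarith [mul_le_mul_of_nonneg_left (two_mul_le_add_sq |s| |t|) (abs_nonneg c)]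

variable {α : Type*} [MeasurableSpace α] {μ : Measure α}

theorem integral_abs_le_sqrt_integral_sq [IsProbabilityMeasure μ] {X : α → ℝ}
    (hX : MemLp X 2 μ) : ∫ ω, |X ω| ∂μ ≤ √(∫ ω, X ω ^ 2 ∂μ) := by
  have hvar := variance_nonneg |X| μ
  rw [variance_eq_sub hX.abs] at hvar
  simp only [Pi.pow_apply, Pi.abs_apply, sq_abs] at hvar
  exact Real.le_sqrt_of_sq_le (by linarith)

theorem hasSum_integral_pow_div_factorial_mul {f g : α → ℂ} (hf : AEStronglyMeasurable f μ)
    (hg : AEStronglyMeasurable g μ) (hfg : Integrable (fun a => rexp ‖f a‖ * ‖g a‖) μ) :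
    HasSum (fun n : ℕ => ∫ a, f a ^ n / n ! * g a ∂μ) (∫ a, Complex.exp (f a) * g a ∂μ) := by
  have hbound (a : α) :
      HasSum (fun n : ℕ => ‖f a‖ ^ n / n ! * ‖g a‖) (rexp ‖f a‖ * ‖g a‖) := by
    refine HasSum.mul_right _ ?_
    rw [Real.exp_eq_exp_ℝ]
    exact NormedSpace.expSeries_div_hasSum_exp _
  refine hasSum_integral_of_dominated_convergence (fun n a => ‖f a‖ ^ n / n ! * ‖g a‖)
    (fun n => by fun_prop) (fun n => ae_of_all _ fun a => ?_)
    (ae_of_all _ fun a => (hbound a).summable) ?_ (ae_of_all _ fun a => ?_)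
  · simp
  · simpa only [(hbound _).tsum_eq] using hfg
  · refine HasSum.mul_right _ ?_
    rw [Complex.exp_eq_exp_ℂ]
    exact NormedSpace.expSeries_div_hasSum_exp _

end General

section GaussianExp

theorem integral_cexp_sq_add_gaussianReal {c : ℝ} (hc : c < 1) (z : ℂ) :
    ∫ s, Complex.exp (c * s ^ 2 / 2 + z * s) ∂gaussianReal 0 1
      = (√(1 - c))⁻¹ * Complex.exp (z ^ 2 / (2 * (1 - c))) := by
  have hc' : 0 < 1 - c := by linarith
  have h_one_sub_ne : (1 - c : ℂ) ≠ 0 := by exact_mod_cast hc'.ne'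
  have h_sub_one_ne : (c - 1 : ℂ) ≠ 0 := by exact_mod_cast (sub_neg.2 hc).ne
  have hπ : √(2 * π) ≠ 0 := by positivity
  calc ∫ s, Complex.exp (c * s ^ 2 / 2 + z * s) ∂gaussianReal 0 1
      = (√(2 * π))⁻¹ * ∫ s : ℝ, Complex.exp ((((c - 1) / 2 : ℝ) : ℂ) * s ^ 2 + z * s + 0) := by
        rw [integral_gaussianReal_eq_integral_smul one_ne_zero, ← integral_const_mul]
        congr with s
        simp only [gaussianPDFReal, NNReal.coe_one, mul_one, sub_zero, Complex.real_smul,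
          Complex.ofReal_mul, Complex.ofReal_exp, mul_assoc, ← Complex.exp_add]
        push_cast
        ring_nf
    _ = (√(2 * π))⁻¹ * (√(2 * π / (1 - c)) * Complex.exp (z ^ 2 / (2 * (1 - c)))) := by
        rw [integral_cexp_quadratic (by rw [Complex.ofReal_re]; linarith)]
        congr 2
        · rw [Real.sqrt_eq_rpow, Complex.ofReal_cpow (by positivity)]
          push_cast
          congr 1
          field
        · congr 1
          push_cast
          field
    _ = (√(1 - c))⁻¹ * Complex.exp (z ^ 2 / (2 * (1 - c))) := by
        rw [Real.sqrt_div (by positivity), ← mul_assoc, ← Complex.ofReal_mul,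
          mul_div_assoc', inv_mul_cancel₀ hπ, one_div]

theorem integrable_cexp_sq_add_gaussianReal {c : ℝ} (hc : c < 1) (z : ℂ) :
    Integrable (fun s : ℝ => Complex.exp (c * s ^ 2 / 2 + z * s)) (gaussianReal 0 1) := by
  have hc' : √(1 - c) ≠ 0 := (Real.sqrt_pos.2 (by linarith)).ne'
  by_contra h
  simpa [hc', integral_undef h] using integral_cexp_sq_add_gaussianReal hc z

theorem integrable_cexp_mul_add_gaussianReal_prod {c : ℝ} (hc : |c| < 1) (z w : ℂ) :
    Integrable (fun p : ℝ × ℝ => Complex.exp (c * p.1 * p.2 + (z * p.1 + w * p.2)))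
      ((gaussianReal 0 1).prod (gaussianReal 0 1)) := by
  refine ((integrable_cexp_sq_add_gaussianReal hc z).mul_prod
    (integrable_cexp_sq_add_gaussianReal hc w)).mono (by fun_prop) (ae_of_all _ fun p => ?_)
  rw [← Complex.exp_add, Complex.norm_exp, Complex.norm_exp, Real.exp_le_exp]
  have h := (le_abs_self _).trans (abs_mul_mul_le_add_sq_div_two c p.1 p.2)
  simp only [Complex.add_re, Complex.re_mul_ofReal, Complex.ofReal_re, Complex.div_ofNat_re,
    ← Complex.ofReal_pow]
  linarith

theorem integral_cexp_mul_add_gaussianReal_prod {c : ℝ} (hc : |c| < 1) (z w : ℂ) :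
    ∫ p : ℝ × ℝ, Complex.exp (c * p.1 * p.2 + (z * p.1 + w * p.2))
        ∂(gaussianReal 0 1).prod (gaussianReal 0 1)
      = (√(1 - c ^ 2))⁻¹ *
          Complex.exp ((z ^ 2 + 2 * c * z * w + w ^ 2) / (2 * (1 - c ^ 2))) := by
  have hc' : c ^ 2 < 1 := (sq_lt_one_iff_abs_lt_one c).2 hc
  have h_one_sub_ne : (1 - c ^ 2 : ℂ) ≠ 0 := by exact_mod_cast (sub_pos.2 hc').ne'
  have hinner (s : ℝ) : ∫ t, Complex.exp (c * s * t + (z * s + w * t)) ∂gaussianReal 0 1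
      = Complex.exp ((c ^ 2 : ℝ) * s ^ 2 / 2 + (z + c * w) * s) * Complex.exp (w ^ 2 / 2) := by
    calc ∫ t, Complex.exp (c * s * t + (z * s + w * t)) ∂gaussianReal 0 1
        = Complex.exp (z * s) * complexMGF id (gaussianReal 0 1) (c * s + w) := by
          rw [complexMGF, ← integral_const_mul]
          congr with t
          rw [← Complex.exp_add, id_eq]
          ring_nf
      _ = _ := by
          rw [complexMGF_id_gaussianReal, ← Complex.exp_add, ← Complex.exp_add]
          push_cast
          ring_nf
  rw [integral_prod _ (integrable_cexp_mul_add_gaussianReal_prod hc z w)]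
  simp_rw [hinner]
  rw [integral_mul_const, integral_cexp_sq_add_gaussianReal hc', mul_assoc, ← Complex.exp_add]
  congr 2
  push_cast
  field

theorem integrable_exp_abs_mul_gaussianReal_prod {c : ℝ} (hc : |c| < 1) :
    Integrable (fun p : ℝ × ℝ => rexp |c * p.1 * p.2|)
      ((gaussianReal 0 1).prod (gaussianReal 0 1)) := by
  have hexp {d : ℝ} (hd : |d| < 1) : Integrable (fun p : ℝ × ℝ => rexp (d * p.1 * p.2))
      ((gaussianReal 0 1).prod (gaussianReal 0 1)) := by
    refine (integrable_cexp_mul_add_gaussianReal_prod hd 0 0).norm.congr (ae_of_all _ fun p => ?_)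
    simp only [zero_mul, add_zero, Complex.norm_exp]
    norm_cast
  simpa only [one_mul] using integrable_exp_mul_abs (X := fun p : ℝ × ℝ => c * p.1 * p.2) (t := 1)
    (by simpa only [one_mul] using hexp hc)
    (by simpa only [neg_mul, one_mul] using hexp (d := -c) (by rwa [abs_neg]))

end GaussianExp

section StdGauss

theorem stdGaussPDF_eq_gaussianPDFReal : stdGaussPDF = gaussianPDFReal 0 1 := by
  ext x
  simp [stdGaussPDF, gaussianPDFReal]

theorem stdGaussPDF_pos (x : ℝ) : 0 < stdGaussPDF x := by
  rw [stdGaussPDF_eq_gaussianPDFReal]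
  exact gaussianPDFReal_pos _ _ _ one_ne_zero

theorem integral_mul_stdGaussPDF (f : ℝ → ℝ) :
    ∫ x, f x * stdGaussPDF x = ∫ x, f x ∂gaussianReal 0 1 := by
  simp only [integral_gaussianReal_eq_integral_smul one_ne_zero, stdGaussPDF_eq_gaussianPDFReal,
    smul_eq_mul, mul_comm]

theorem integrable_mul_stdGaussPDF_iff {f : ℝ → ℝ} :
    Integrable (fun x => f x * stdGaussPDF x) ↔ Integrable f (gaussianReal 0 1) := by
  simp only [gaussianReal_of_var_ne_zero _ one_ne_zero, stdGaussPDF_eq_gaussianPDFReal,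
    integrable_withDensity_iff_integrable_smul' (measurable_gaussianPDF 0 1)
      (ae_of_all _ fun _ => gaussianPDF_lt_top), toReal_gaussianPDF, smul_eq_mul, mul_comm]

theorem setIntegral_Ioi_stdGaussPDF (a : ℝ) :
    ∫ x in Set.Ioi a, stdGaussPDF x = 1 - stdGaussCDF a := by
  have h := integral_add_compl (measurableSet_Iic (a := a)) (integrable_gaussianPDFReal 0 1)
  rw [integral_gaussianPDFReal_eq_one 0 one_ne_zero, Set.compl_Iic] at h
  rw [stdGaussCDF, stdGaussPDF_eq_gaussianPDFReal]
  linarith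

theorem integrable_aeval_gaussianReal {R : Type*} [CommSemiring R] [Algebra R ℝ] (p : R[X])
    (m : ℝ) (v : NNReal) : Integrable (fun x => aeval x p) (gaussianReal m v) := by
  have hpow (k : ℕ) : Integrable (fun x => x ^ k) (gaussianReal m v) :=
    integrable_pow_of_mem_interior_integrableExpSet (X := id)
      (by simp [integrableExpSet_id_gaussianReal]) k
  simp only [aeval_eq_sum_range, Algebra.smul_def]
  exact integrable_finsetSum _ fun k _ => (hpow k).const_mul _

end StdGauss

section HermiteGauss

theorem He_eq_aeval_hermite (n : ℕ) (x : ℝ) : He n x = aeval x (hermite n) := by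
  rw [He, hermite_eq_deriv_gaussian', iteratedDeriv_eq_iterate]
  simp only [neg_div]
  ring

/-- The Hermite polynomial times the standard Gaussian density, `He_n φ`, which is
`(-1)ⁿ φ⁽ⁿ⁾`. -/
noncomputable def hermiteGauss (n : ℕ) (x : ℝ) : ℝ := He n x * stdGaussPDF x

theorem hermiteGauss_zero : hermiteGauss 0 = stdGaussPDF := by
  ext x
  simp [hermiteGauss, He_eq_aeval_hermite]

theorem hermiteGauss_eq_iteratedDeriv (n : ℕ) (x : ℝ) :
    hermiteGauss n x
      = (√(2 * π))⁻¹ * (-1) ^ n * iteratedDeriv n (fun y => rexp (-y ^ 2 / 2)) x := by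
  have hexp : rexp (x ^ 2 / 2) * rexp (-x ^ 2 / 2) = 1 := by
    rw [← Real.exp_add, neg_div, add_neg_cancel, Real.exp_zero]
  rw [hermiteGauss, He, stdGaussPDF]
  linear_combination
    (√(2 * π))⁻¹ * (-1) ^ n * iteratedDeriv n (fun y => rexp (-y ^ 2 / 2)) x * hexp

theorem hasDerivAt_hermiteGauss (n : ℕ) (x : ℝ) :
    HasDerivAt (hermiteGauss n) (-hermiteGauss (n + 1) x) x := by
  have hsmooth : ContDiff ℝ (n + 1 : ℕ) fun y : ℝ => rexp (-y ^ 2 / 2) := by fun_prop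
  have h := (hsmooth.differentiable_iteratedDeriv n (by norm_cast; omega) x).hasDerivAt
  rw [← iteratedDeriv_succ] at h
  rw [funext (hermiteGauss_eq_iteratedDeriv n), hermiteGauss_eq_iteratedDeriv]
  exact (h.const_mul _).congr_deriv (by ring)

theorem integrable_aeval_mul_hermiteGauss {R : Type*} [CommSemiring R] [Algebra R ℝ] (p : R[X])
    (n : ℕ) : Integrable fun x => aeval x p * hermiteGauss n x := by
  have h := integrable_aeval_gaussianReal
    (p.map (algebraMap R ℝ) * (hermite n).map (Int.castRingHom ℝ)) 0 1
  simpa [hermiteGauss, He_eq_aeval_hermite, mul_assoc, aeval_def, eval_map] using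
    integrable_mul_stdGaussPDF_iff.2 h

theorem integrable_hermiteGauss (n : ℕ) : Integrable (hermiteGauss n) := by
  simpa using integrable_aeval_mul_hermiteGauss (1 : ℤ[X]) n

theorem integral_aeval_mul_hermiteGauss {R : Type*} [CommSemiring R] [Algebra R ℝ] (p : R[X])
    (n : ℕ) :
    ∫ x, aeval x p * hermiteGauss n x = ∫ x, aeval x (derivative^[n] p) * stdGaussPDF x := by
  induction n generalizing p with
  | zero => simp [hermiteGauss_zero]
  | succ n ih =>
    rw [Function.iterate_succ_apply, ← ih (derivative p)]
    have hparts := integral_mul_deriv_eq_deriv_mul_of_integrable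
      (fun x _ => p.hasDerivAt_aeval x) (fun x _ => hasDerivAt_hermiteGauss n x)
      (by simpa [Pi.mul_def] using (integrable_aeval_mul_hermiteGauss p (n + 1)).neg)
      (integrable_aeval_mul_hermiteGauss _ n) (integrable_aeval_mul_hermiteGauss p n)
    simpa [integral_neg] using hparts

theorem integral_sq_He (n : ℕ) : ∫ x, He n x ^ 2 ∂gaussianReal 0 1 = n ! := by
  calc ∫ x, He n x ^ 2 ∂gaussianReal 0 1
      = ∫ x, aeval x (hermite n) * hermiteGauss n x := by
        simp only [← integral_mul_stdGaussPDF, hermiteGauss, ← He_eq_aeval_hermite, sq, mul_assoc]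
    _ = ∫ x, aeval x (derivative^[n] (hermite n)) * stdGaussPDF x :=
        integral_aeval_mul_hermiteGauss _ n
    _ = n ! := by
        rw [integral_mul_stdGaussPDF, iterate_derivative_eq_C_of_natDegree_le natDegree_hermite.le]
        simp

theorem integral_abs_hermiteGauss_le (n : ℕ) : ∫ x, |hermiteGauss n x| ≤ √(n !) := by
  have hmemLp : MemLp (He n) 2 (gaussianReal 0 1) := by
    rw [memLp_two_iff_integrable_sq (by simp only [funext (He_eq_aeval_hermite n)]; fun_prop)]
    simp only [He_eq_aeval_hermite, ← map_pow]
    exact integrable_aeval_gaussianReal (hermite n ^ 2) 0 1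
  simp only [hermiteGauss, abs_mul, abs_of_pos (stdGaussPDF_pos _)]
  rw [integral_mul_stdGaussPDF, ← integral_sq_He]
  exact integral_abs_le_sqrt_integral_sq hmemLp

theorem setIntegral_Ioi_hermiteGauss_succ (n : ℕ) (a : ℝ) :
    ∫ x in Set.Ioi a, hermiteGauss (n + 1) x = hermiteGauss n a := by
  have hderiv (x : ℝ) (_ : x ∈ Set.Ici a) := hasDerivAt_hermiteGauss n x
  have hlim := tendsto_zero_of_hasDerivAt_of_integrableOn_Ioi
    (fun x hx => hderiv x (Set.Ioi_subset_Ici_self hx))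
    (integrable_hermiteGauss _).neg.integrableOn (integrable_hermiteGauss _).integrableOn
  have hftc := integral_Ioi_of_hasDerivAt_of_tendsto' hderiv
    (integrable_hermiteGauss _).neg.integrableOn hlim
  rw [integral_neg] at hftc
  linarith

theorem integral_pow_mul_cexp_gaussianReal (n : ℕ) (x : ℝ) :
    ∫ t : ℝ, (-I * t) ^ n * Complex.exp (I * x * t) ∂gaussianReal 0 1
      = ((√(2 * π) * hermiteGauss n x : ℝ) : ℂ) := by
  have hcharFun : charFun (gaussianReal 0 1) = fun y => ((rexp (-y ^ 2 / 2) : ℝ) : ℂ) := by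
    ext y
    simp [charFun_gaussianReal, neg_div]
  have hderiv : ((iteratedDeriv n (fun y => rexp (-y ^ 2 / 2)) x : ℝ) : ℂ)
      = I ^ n * ∫ t : ℝ, t ^ n * Complex.exp (x * t * I) ∂gaussianReal 0 1 := by
    rw [← iteratedDeriv_charFun (memLp_id_gaussianReal n), hcharFun]
    exact (iteratedDeriv_continuousLinearMap_comp Complex.ofRealCLM (by fun_prop)).symm
  have hπ : √(2 * π) ≠ 0 := by positivity
  rw [hermiteGauss_eq_iteratedDeriv, mul_assoc, mul_inv_cancel_left₀ hπ, Complex.ofReal_mul,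
    hderiv, Complex.ofReal_pow, Complex.ofReal_neg, Complex.ofReal_one, ← mul_assoc, ← mul_pow,
    neg_one_mul, ← integral_const_mul]
  congr with t
  rw [mul_pow]
  ring_nf

end HermiteGauss

section Mehler

theorem integral_mul_pow_mul_cexp_gaussianReal_prod (ρ : ℝ) (n : ℕ) (x y : ℝ) :
    ∫ p : ℝ × ℝ, ((-ρ : ℝ) * p.1 * p.2 : ℂ) ^ n / n ! * Complex.exp (I * x * p.1 + I * y * p.2)
        ∂(gaussianReal 0 1).prod (gaussianReal 0 1)
      = ((2 * π * (ρ ^ n / n ! * (hermiteGauss n x * hermiteGauss n y)) : ℝ) : ℂ) := by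
  have hsplit (p : ℝ × ℝ) :
      ((-ρ : ℝ) * p.1 * p.2 : ℂ) ^ n / n ! * Complex.exp (I * x * p.1 + I * y * p.2)
        = ρ ^ n / n ! * (((-I * p.1) ^ n * Complex.exp (I * x * p.1)) *
            ((-I * p.2) ^ n * Complex.exp (I * y * p.2))) := by
    have hI : ((-ρ : ℝ) * p.1 * p.2 : ℂ) = ρ * ((-I * p.1) * (-I * p.2)) := by
      push_cast
      linear_combination -(ρ * p.1 * p.2) * Complex.I_sq
    rw [hI, mul_pow, mul_pow, Complex.exp_add]
    ring
  have hπ : (√(2 * π) * √(2 * π) : ℂ) = 2 * π := by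
    exact_mod_cast Real.mul_self_sqrt (by positivity : 0 ≤ 2 * π)
  simp only [hsplit]
  rw [integral_const_mul,
    integral_prod_mul (fun s : ℝ => (-I * s) ^ n * Complex.exp (I * x * s))
      fun t : ℝ => (-I * t) ^ n * Complex.exp (I * y * t),
    integral_pow_mul_cexp_gaussianReal, integral_pow_mul_cexp_gaussianReal]
  push_cast
  linear_combination ρ ^ n / n ! * (hermiteGauss n x * hermiteGauss n y) * hπ

theorem integral_cexp_gaussianReal_prod_eq_bivGaussPDF {ρ : ℝ} (hρ : |ρ| < 1) (x y : ℝ) :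
    ∫ p : ℝ × ℝ, Complex.exp ((-ρ : ℝ) * p.1 * p.2 + (I * x * p.1 + I * y * p.2))
        ∂(gaussianReal 0 1).prod (gaussianReal 0 1)
      = ((2 * π * bivGaussPDF ρ x y : ℝ) : ℂ) := by
  have hexponent : ((I * x) ^ 2 + 2 * (-ρ : ℝ) * (I * x) * (I * y) + (I * y) ^ 2 : ℂ)
        / (2 * (1 - (-ρ : ℝ) ^ 2))
      = ((-(x ^ 2 - 2 * ρ * x * y + y ^ 2) / (2 * (1 - ρ ^ 2)) : ℝ) : ℂ) := by
    push_cast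
    linear_combination
      (x ^ 2 - 2 * ρ * x * y + y ^ 2) / (2 * (1 - ρ ^ 2)) * Complex.I_sq
  have hconst : (√(1 - (-ρ) ^ 2))⁻¹ = 2 * π * (1 / (2 * π * √(1 - ρ ^ 2))) := by
    field_simp
  rw [integral_cexp_mul_add_gaussianReal_prod (by rwa [abs_neg]), hexponent, hconst,
    ← Complex.ofReal_exp, ← Complex.ofReal_mul, mul_assoc, bivGaussPDF]

theorem hasSum_bivGaussPDF {ρ : ℝ} (hρ : |ρ| < 1) (x y : ℝ) :
    HasSum (fun n : ℕ => ρ ^ n / n ! * (hermiteGauss n x * hermiteGauss n y))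
      (bivGaussPDF ρ x y) := by
  have hintegrable : Integrable (fun p : ℝ × ℝ => rexp ‖((-ρ : ℝ) * p.1 * p.2 : ℂ)‖ *
      ‖Complex.exp (I * x * p.1 + I * y * p.2)‖) ((gaussianReal 0 1).prod (gaussianReal 0 1)) := by
    refine (integrable_exp_abs_mul_gaussianReal_prod hρ).congr (ae_of_all _ fun p => ?_)
    simp [Complex.norm_exp, abs_mul]
  have hsum := hasSum_integral_pow_div_factorial_mul (by fun_prop) (by fun_prop) hintegrable
  simp only [integral_mul_pow_mul_cexp_gaussianReal_prod, ← Complex.exp_add,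
    integral_cexp_gaussianReal_prod_eq_bivGaussPDF hρ, Complex.hasSum_ofReal] at hsum
  exact (hasSum_mul_left_iff (by positivity)).1 hsum

theorem integrable_bivGaussPDF {ρ : ℝ} (hρ : |ρ| < 1) :
    Integrable fun p : ℝ × ℝ => bivGaussPDF ρ p.1 p.2 := by
  have hρ' : 0 < 1 - ρ ^ 2 := sub_pos.2 ((sq_lt_one_iff_abs_lt_one ρ).2 hρ)
  have hc : 0 < (1 - |ρ|) / (2 * (1 - ρ ^ 2)) := div_pos (by linarith) (by linarith)
  refine Integrable.const_mul (((integrable_exp_neg_mul_sq hc).mul_prod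
    (integrable_exp_neg_mul_sq hc)).mono' (by fun_prop) (ae_of_all _ fun p => ?_)) _
  have hρst := (le_abs_self _).trans (abs_mul_mul_le_add_sq_div_two ρ p.1 p.2)
  rw [Real.norm_of_nonneg (by positivity), ← Real.exp_add, Real.exp_le_exp]
  calc -(p.1 ^ 2 - 2 * ρ * p.1 * p.2 + p.2 ^ 2) / (2 * (1 - ρ ^ 2))
      ≤ -(1 - |ρ|) * (p.1 ^ 2 + p.2 ^ 2) / (2 * (1 - ρ ^ 2)) := by gcongr; linarith
    _ = _ := by ring

theorem hasSum_setIntegral_bivGaussPDF {ρ : ℝ} (hρ : |ρ| < 1) (s t : Set ℝ) :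
    HasSum (fun n : ℕ => ρ ^ n / n ! *
        ((∫ x in s, hermiteGauss n x) * ∫ y in t, hermiteGauss n y))
      (∫ x in s, ∫ y in t, bivGaussPDF ρ x y) := by
  let F (n : ℕ) (p : ℝ × ℝ) : ℝ := ρ ^ n / n ! * (hermiteGauss n p.1 * hermiteGauss n p.2)
  have hintegrable (n : ℕ) :
      Integrable (F n) ((volume.restrict s).prod (volume.restrict t)) :=
    ((integrable_hermiteGauss n).restrict.mul_prod
      (integrable_hermiteGauss n).restrict).const_mul _
  have hL1 (n : ℕ) (u : Set ℝ) : ∫ x in u, |hermiteGauss n x| ≤ √(n !) :=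
    (setIntegral_le_integral (integrable_hermiteGauss n).abs
      (ae_of_all _ fun _ => abs_nonneg _)).trans (integral_abs_hermiteGauss_le n)
  have hnorm (n : ℕ) :
      ∫ p, ‖F n p‖ ∂(volume.restrict s).prod (volume.restrict t) ≤ |ρ| ^ n := by
    simp only [F, norm_mul, Real.norm_eq_abs, integral_const_mul]
    rw [integral_prod_mul (fun x => |hermiteGauss n x|) fun y => |hermiteGauss n y|]
    calc _ ≤ |ρ ^ n / n !| * (√(n !) * √(n !)) := by
          gcongr
          exacts [hL1 n s, hL1 n t]
      _ = |ρ| ^ n := by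
          rw [Real.mul_self_sqrt (by positivity), abs_div, abs_pow, Nat.abs_cast,
            div_mul_cancel₀ _ (by positivity)]
  have hsum := hasSum_integral_of_summable_integral_norm hintegrable
    ((summable_geometric_of_lt_one (abs_nonneg ρ) hρ).of_nonneg_of_le
      (fun n => integral_nonneg fun p => norm_nonneg _) hnorm)
  simp only [F, (hasSum_bivGaussPDF hρ _ _).tsum_eq, integral_const_mul,
    integral_prod_mul (hermiteGauss _) (hermiteGauss _)] at hsum
  rwa [integral_prod] at hsum
  rw [Measure.prod_restrict]
  exact (integrable_bivGaussPDF hρ).restrict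

end Mehler

/-- The tetrachoric series of Theorem 1 of the paper: the joint complementary CDF of a
standardized bivariate Gaussian pair with correlation `ρ ∈ (−1,1)` satisfies
`∫_a^∞ ∫_b^∞ f_ρ = (1−Φ(a))(1−Φ(b)) + φ(a)φ(b)·∑_{n=1}^∞ (ρⁿ/n!)·He_{n−1}(a)·He_{n−1}(b)`,
and the series converges. -/
theorem bivariate_gaussian_ccdf_series
    (ρ : ℝ) (hρ : ρ ∈ Set.Ioo (-1 : ℝ) 1) (a b : ℝ) :
    Summable (fun n : ℕ =>
      ρ ^ (n + 1) / ((n + 1).factorial : ℝ) * He n a * He n b) ∧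
    (∫ z₁ in Set.Ioi a, ∫ z₂ in Set.Ioi b, bivGaussPDF ρ z₁ z₂)
      = (1 - stdGaussCDF a) * (1 - stdGaussCDF b) +
          stdGaussPDF a * stdGaussPDF b *
            ∑' n : ℕ, ρ ^ (n + 1) / ((n + 1).factorial : ℝ) * He n a * He n b := by
  have hφ : stdGaussPDF a * stdGaussPDF b ≠ 0 :=
    (mul_pos (stdGaussPDF_pos a) (stdGaussPDF_pos b)).ne'
  have hterm (n : ℕ) : ρ ^ (n + 1) / (n + 1) ! * (hermiteGauss n a * hermiteGauss n b)
      = stdGaussPDF a * stdGaussPDF b * (ρ ^ (n + 1) / (n + 1) ! * He n a * He n b) := by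
    rw [hermiteGauss, hermiteGauss]
    ring
  have hsum := (hasSum_nat_add_iff' 1).2
    (hasSum_setIntegral_bivGaussPDF (abs_lt.2 hρ) (Set.Ioi a) (Set.Ioi b))
  simp only [setIntegral_Ioi_hermiteGauss_succ, hterm, Finset.sum_range_one, hermiteGauss_zero,
    setIntegral_Ioi_stdGaussPDF, pow_zero, Nat.factorial_zero, Nat.cast_one, div_one,
    one_mul] at hsum
  refine ⟨(summable_mul_left_iff hφ).1 hsum.summable, ?_⟩
  rw [← tsum_mul_left, hsum.tsum_eq]
  ring
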